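/- Let F be a field, let E = F(α) be a field extension of F of prime degree p, and let φ = N_{E/F} be its norm form. Let K/F be a finite field extension admitting a tower of fields F = K_0 ⊂ K_1 ⊂ ⋯ ⊂ K_n = K such that each degree [K_{i+1} : K_i] is either a power of p or coprime to p. Then φ satisfies Scharlau's norm principle for K/F: if a ∈ K^× is a similarity factor of the extended form N_{(K⊗_F E)/K}, then N_{K/F}(a) is a similarity factor of N_{E/F}. -/

import Mathlib

/-!
A similarity factor `a` of a norm form is a value of it, since a similarity `g` with factor `a`
satisfies `N (g 1) = a`; conversely multiplication by a nonzero `e : E` is a similarity of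
`N_{E/F}` with factor `N e`. So Scharlau's norm principle asks that `N_{K/F}` send nonzero values
of `N_{K ⊗ E / K}` to values of `N_{E/F}`. This is transitivity of the norm along both
`F → K → K ⊗ E` and `F → E → K ⊗ E`: if `a = N_{K ⊗ E / K} z`, then
`N_{K/F} a = N_{K ⊗ E / F} z = N_{E/F} (N_{K ⊗ E / E} z)`.
-/

open TensorProduct
attribute [local instance] Algebra.TensorProduct.rightAlgebra in
/-- Both sides are the norm of `z` from `K ⊗ E` down to `F`. -/
theorem norm_norm_tensor_comm (F E K : Type*) [Field F] [Field E] [Field K]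
    [Algebra F E] [Algebra F K] [FiniteDimensional F E] [FiniteDimensional F K]
    (z : K ⊗[F] E) :
    Algebra.norm F (Algebra.norm K z) = Algebra.norm F (Algebra.norm E z) := by
  rw [Algebra.norm_norm, Algebra.norm_norm]

/-- **Scharlau's norm principle for the norm form of a simple extension `E = F(α)` of prime
degree `p`, along towers.**  If `K/F` admits a tower `F = K_0 ⊂ K_1 ⊂ ⋯ ⊂ K_n = K` in which
each step degree `[K_{i+1} : K_i]` is either a power of `p` or coprime to `p`, then any
similarity factor `a ∈ K^×` of the extended norm form `N_{(K⊗E)/K}` has `N_{K/F}(a)` a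
similarity factor of `N_{E/F}`. -/
theorem snp_prime_degree_tower
    (F E K : Type*) [Field F] [Field E] [Field K]
    [Algebra F E] [Algebra F K] [FiniteDimensional F E] [FiniteDimensional F K]
    (p : ℕ) (hp : p.Prime)
    (α : E) (hαgen : IntermediateField.adjoin F {α} = ⊤)
    (hEdeg : Module.finrank F E = p)
    (n : ℕ) (T : Fin (n + 1) → IntermediateField F K)
    (hmono : ∀ i : Fin n, T i.castSucc ≤ T i.succ)
    (h0 : T 0 = ⊥) (hn : T (Fin.last n) = ⊤)
    (hstep : ∀ i : Fin n, ∃ m : ℕ,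
      Module.finrank F (T i.succ) = Module.finrank F (T i.castSucc) * m ∧
      ((∃ r : ℕ, m = p ^ r) ∨ Nat.Coprime m p)) :
    ∀ a : K, a ≠ 0 →
      (∃ g : (K ⊗[F] E) ≃ₗ[K] (K ⊗[F] E),
        ∀ z : K ⊗[F] E, Algebra.norm K (g z) = a * Algebra.norm K z) →
      ∃ h : E ≃ₗ[F] E,
        ∀ x : E, Algebra.norm F (h x) = Algebra.norm F a * Algebra.norm F x := by
  rintro a ha ⟨g, hg⟩
  have key : Algebra.norm F (Algebra.norm K (g 1)) = Algebra.norm F a := by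
    rw [hg, map_one, mul_one]
  rw [norm_norm_tensor_comm F E K] at key
  generalize he : @Algebra.norm E (K ⊗[F] E) _ _ Algebra.TensorProduct.rightAlgebra (g 1) = e
    at key
  have he0 : e ≠ 0 := by
    rintro rfl
    rw [Algebra.norm_zero] at key
    exact ha (Algebra.norm_eq_zero_iff.mp key.symm)
  refine ⟨DistribMulAction.toLinearEquiv F E (Units.mk0 e he0), fun x => ?_⟩
  rw [← key, ← map_mul]
  rfl
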